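/- Let $n \ge 2$ be an integer and, for $-1<s<1$, put $$\Gamma_-(s) = \sqrt[n]{\frac{1+s}{1-s}}\;\exp\left(\frac{n-2}{n\sqrt{n-1}}\,\arctan\bigl(s\sqrt{n-1}\bigr)\right).$$ Then $\Gamma_-$ is a strictly increasing bijection of $(-1,1)$ onto $(0,\infty)$. Let $u_- : (0,\infty)\to(-1,1)$ be its inverse, and for $t>0$ define $$H_-(t) = u_-(t)\,\Bigl(u_-(t)^2+\tfrac{1}{n-1}\Bigr)^{\frac1n-\frac12}\bigl(1-u_-(t)^2\bigr)^{-\frac1n}.$$ Then: (i) $H_-(1)=0$; (ii) $H_-(1/t) = -H_-(t)$ for all $t>0$; (iii) $H_-$ is differentiable on $(0,\infty)$ and $t\,H_-'(t)\,u_-(t) = H_-(t)$ for all $t>0$; (iv) $H_-$ solves the characteristic equation $$\Bigl(H_-(t)^2+\frac{t^2H_-'(t)^2}{n-1}\Bigr)^{\frac{n-2}{2}}\bigl(H_-(t)^2-t^2H_-'(t)^2\bigr) = -1 \quad\text{for all } t>0.$$ -/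

import Mathlib

/-- `Γ₋(s) = ((1+s)/(1-s))^(1/n) · exp( ((n-2)/(n√(n-1))) · arctan(s√(n-1)) )`, for `-1 < s < 1`. -/
noncomputable def GammaMinus (n : ℕ) (s : ℝ) : ℝ :=
  ((1 + s) / (1 - s)) ^ ((1 : ℝ) / (n : ℝ)) *
    Real.exp ((((n : ℝ) - 2) / ((n : ℝ) * Real.sqrt ((n : ℝ) - 1))) *
      Real.arctan (s * Real.sqrt ((n : ℝ) - 1)))

/-- `u₋`, the inverse of `Γ₋ : (-1,1) → (0,∞)`; only its values at `t > 0` are meaningful. -/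
noncomputable def uMinus (n : ℕ) : ℝ → ℝ :=
  Function.invFunOn (GammaMinus n) (Set.Ioo (-1 : ℝ) 1)

/-- `H₋(t) = u₋(t) · (u₋(t)² + 1/(n-1))^(1/n - 1/2) · (1 - u₋(t)²)^(-1/n)`, for `t > 0`. -/
noncomputable def HMinus (n : ℕ) (t : ℝ) : ℝ :=
  uMinus n t *
    ((uMinus n t) ^ 2 + 1 / ((n : ℝ) - 1)) ^ ((1 : ℝ) / (n : ℝ) - 1 / 2) *
    (1 - (uMinus n t) ^ 2) ^ (-((1 : ℝ) / (n : ℝ)))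

/-- The characteristic expression
`ℒH(t) = (H(t)² + t²H'(t)²/(n-1))^((n-2)/2) · (H(t)² - t²H'(t)²)`. -/
noncomputable def charExpr (n : ℕ) (H : ℝ → ℝ) (t : ℝ) : ℝ :=
  ((H t) ^ 2 + t ^ 2 * (deriv H t) ^ 2 / ((n : ℝ) - 1)) ^ (((n : ℝ) - 2) / 2) *
    ((H t) ^ 2 - t ^ 2 * (deriv H t) ^ 2)

/-!
The dimension enters only as a real number `p > 1`. Parametrize the graph of `H₋` by the value
`s = u₋(t)`: then `t = Γ₋(s)` and `H₋ = s P(s)`, where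
`P(s) = (s² + 1/(p-1))^(1/p - 1/2) (1 - s²)^(-1/p)`. Both `(log Γ₋)'` and `1 + s (log P)'` equal the
rational function `(1 + s²) / ((1 - s²) (1 + (p-1) s²))`, so `t dH₋/dt = (sP)' / (log Γ₋)' = P(s)`.
The characteristic equation thereby becomes an identity in `s`: with
`q = (s² + 1/(p-1)) / (1 - s²)` one has `P² (s² + 1/(p-1)) = q^(2/p)` and
`P² (1 - s²) = q^(2/p - 1)`, and the powers of `q` cancel. The symmetry `t ↦ 1/t` is the identity
`Γ₋(-s) = 1/Γ₋(s)`.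
-/

open Function Set Filter Topology

/-- `Γ₋` with a real parameter `p` in place of the dimension `n`. -/
noncomputable def realGammaMinus (p s : ℝ) : ℝ :=
  ((1 + s) / (1 - s)) ^ (1 / p) *
    Real.exp ((p - 2) / (p * √(p - 1)) * Real.arctan (s * √(p - 1)))

/-- `u₋` with a real parameter `p` in place of the dimension `n`: the inverse of
`realGammaMinus p` on `(-1, 1)`, with junk values off `(0, ∞)`. -/
noncomputable def realUMinus (p : ℝ) : ℝ → ℝ :=
  invFunOn (realGammaMinus p) (Ioo (-1) 1)

/-- `H₋` with a real parameter `p` in place of the dimension `n`. -/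
noncomputable def realHMinus (p t : ℝ) : ℝ :=
  realUMinus p t * (realUMinus p t ^ 2 + 1 / (p - 1)) ^ (1 / p - 1 / 2) *
    (1 - realUMinus p t ^ 2) ^ (-(1 / p))

/-- The characteristic expression `ℒH` with a real parameter `p` in place of the dimension `n`. -/
noncomputable def realCharExpr (p : ℝ) (H : ℝ → ℝ) (t : ℝ) : ℝ :=
  (H t ^ 2 + t ^ 2 * deriv H t ^ 2 / (p - 1)) ^ ((p - 2) / 2) *
    (H t ^ 2 - t ^ 2 * deriv H t ^ 2)

/-- The logarithmic derivative of `Γ₋`, as a rational function of `s`. -/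
noncomputable def gammaLogDeriv (p s : ℝ) : ℝ :=
  (1 + s ^ 2) / ((1 - s ^ 2) * (1 + s ^ 2 * (p - 1)))

/-- The quantity `t H₋'(t) = H₋(t) / u₋(t)`, as a function of `s = u₋(t)`. -/
noncomputable def logSlope (p s : ℝ) : ℝ :=
  (s ^ 2 + 1 / (p - 1)) ^ (1 / p - 1 / 2) * (1 - s ^ 2) ^ (-(1 / p))

theorem continuousAt_invFunOn {α β : Type*} [LinearOrder α] [TopologicalSpace α]
    [OrderTopology α] [DenselyOrdered α] [Nonempty α] [LinearOrder β] [TopologicalSpace β]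
    [OrderTopology β] {f : α → β} {s : Set α} {t : Set β} {y : β} (hf : StrictMonoOn f s)
    (hst : BijOn f s t) (hs : s ∈ 𝓝 (invFunOn f s y)) (ht : t ∈ 𝓝 y) :
    ContinuousAt (invFunOn f s) y := by
  have hmono : StrictMonoOn (invFunOn f s) t := fun a ha b hb hab => by
    rwa [← hf.lt_iff_lt (hst.surjOn.mapsTo_invFunOn ha) (hst.surjOn.mapsTo_invFunOn hb),
      hst.surjOn.rightInvOn_invFunOn ha, hst.surjOn.rightInvOn_invFunOn hb]
  refine hmono.continuousAt_of_image_mem_nhds ht (mem_of_superset hs fun x hx => ?_)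
  exact ⟨f x, hst.mapsTo hx, hst.injOn.leftInvOn_invFunOn hx⟩

theorem hasDerivAt_invFunOn {f : ℝ → ℝ} {f' : ℝ} {s t : Set ℝ} {y : ℝ} (hf : StrictMonoOn f s)
    (hst : BijOn f s t) (hs : s ∈ 𝓝 (invFunOn f s y)) (ht : t ∈ 𝓝 y)
    (hderiv : HasDerivAt f f' (invFunOn f s y)) (hf' : f' ≠ 0) :
    HasDerivAt (invFunOn f s) f'⁻¹ y :=
  hderiv.of_local_left_inverse (continuousAt_invFunOn hf hst hs ht) hf'
    (mem_of_superset ht hst.surjOn.rightInvOn_invFunOn)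

theorem hasDerivAt_rpow_const_eq_mul_logDeriv {f : ℝ → ℝ} {f' x : ℝ} (a : ℝ)
    (hf : HasDerivAt f f' x) (hx : f x ≠ 0) :
    HasDerivAt (fun y => f y ^ a) (f x ^ a * (a * (f' / f x))) x :=
  (hf.rpow_const (Or.inl hx)).congr_deriv (by rw [Real.rpow_sub_one hx]; ring)

theorem rpow_mul_rpow_sq_mul {x y : ℝ} (hx : 0 < x) (hy : 0 < y) (a : ℝ) :
    (x ^ (a - 1 / 2) * y ^ (-a)) ^ 2 * x = (x / y) ^ (2 * a) := by
  have hx_pow : (x ^ (a - 1 / 2)) ^ 2 * x = x ^ (2 * a) := by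
    rw [← Real.rpow_mul_natCast hx.le, ← Real.rpow_add_one hx.ne']
    ring_nf
  have hy_pow : (y ^ (-a)) ^ 2 = (y ^ (2 * a))⁻¹ := by
    rw [← Real.rpow_mul_natCast hy.le, ← Real.rpow_neg hy.le]
    ring_nf
  rw [Real.div_rpow hx.le hy.le, mul_pow, mul_right_comm, hx_pow, hy_pow, div_eq_mul_inv]

section

variable {p s t : ℝ}

theorem one_sub_sq_pos (hs : s ∈ Ioo (-1) 1) : 0 < 1 - s ^ 2 := by
  nlinarith [hs.1, hs.2]

theorem one_add_div_one_sub_pos (hs : s ∈ Ioo (-1) 1) : 0 < (1 + s) / (1 - s) :=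
  div_pos (by linarith [hs.1]) (by linarith [hs.2])

theorem one_add_sq_mul_pos (hp : 1 < p) (s : ℝ) : 0 < 1 + s ^ 2 * (p - 1) := by
  have := sub_pos.2 hp
  positivity

theorem sq_add_one_div_pos (hp : 1 < p) (s : ℝ) : 0 < s ^ 2 + 1 / (p - 1) := by
  have := sub_pos.2 hp
  positivity

theorem gammaLogDeriv_pos (hp : 1 < p) (hs : s ∈ Ioo (-1) 1) : 0 < gammaLogDeriv p s :=
  div_pos (by positivity) (mul_pos (one_sub_sq_pos hs) (one_add_sq_mul_pos hp s))

theorem gammaLogDeriv_eq_add (hp : 1 < p) (hs : s ∈ Ioo (-1) 1) :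
    gammaLogDeriv p s =
      2 / (p * (1 - s ^ 2)) + (p - 2) / (p * (1 + s ^ 2 * (p - 1))) := by
  have hp0 : p ≠ 0 := by positivity
  have hsub := (one_sub_sq_pos hs).ne'
  have hadd := (one_add_sq_mul_pos hp s).ne'
  rw [gammaLogDeriv]
  field_simp
  ring

theorem gammaLogDeriv_eq_one_add (hp : 1 < p) (hs : s ∈ Ioo (-1) 1) :
    gammaLogDeriv p s = 1 + s * ((1 / p - 1 / 2) * (2 * s / (s ^ 2 + 1 / (p - 1))) +
      -(1 / p) * (-(2 * s) / (1 - s ^ 2))) := by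
  have hp0 : p ≠ 0 := by positivity
  have hp1 : p - 1 ≠ 0 := (sub_pos.2 hp).ne'
  have hsub := (one_sub_sq_pos hs).ne'
  have hadd := (one_add_sq_mul_pos hp s).ne'
  have hquad : s ^ 2 + 1 / (p - 1) = (1 + s ^ 2 * (p - 1)) / (p - 1) := by
    field_simp
    ring
  rw [gammaLogDeriv, hquad]
  field_simp
  ring

theorem realGammaMinus_pos (p : ℝ) (hs : s ∈ Ioo (-1) 1) : 0 < realGammaMinus p s :=
  mul_pos (Real.rpow_pos_of_pos (one_add_div_one_sub_pos hs) _) (Real.exp_pos _)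

theorem realGammaMinus_zero (p : ℝ) : realGammaMinus p 0 = 1 := by
  simp [realGammaMinus]

theorem realGammaMinus_neg (p : ℝ) (hs : s ∈ Ioo (-1) 1) :
    realGammaMinus p (-s) = (realGammaMinus p s)⁻¹ := by
  rw [realGammaMinus, realGammaMinus, mul_inv, ← Real.exp_neg,
    ← Real.inv_rpow (one_add_div_one_sub_pos hs).le, inv_div, neg_mul, Real.arctan_neg, mul_neg,
    sub_neg_eq_add, ← sub_eq_add_neg]

theorem hasDerivAt_one_add_div_one_sub_rpow (a : ℝ) (hs : s ∈ Ioo (-1) 1) :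
    HasDerivAt (fun x => ((1 + x) / (1 - x)) ^ a)
      (((1 + s) / (1 - s)) ^ a * (a * (2 / (1 - s ^ 2)))) s := by
  have hadd : 1 + s ≠ 0 := by linarith [hs.1]
  have hsub : 1 - s ≠ 0 := by linarith [hs.2]
  have hquot : HasDerivAt (fun x : ℝ => (1 + x) / (1 - x)) (2 / (1 - s) ^ 2) s :=
    (((hasDerivAt_id' s).const_add 1).div ((hasDerivAt_id' s).const_sub 1) hsub).congr_deriv
      (by ring)
  refine (hasDerivAt_rpow_const_eq_mul_logDeriv a hquot
    (one_add_div_one_sub_pos hs).ne').congr_deriv ?_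
  have hfactor : 1 - s ^ 2 = (1 - s) * (1 + s) := by ring
  rw [hfactor]
  field_simp

theorem hasDerivAt_exp_mul_arctan_mul (c r s : ℝ) :
    HasDerivAt (fun x => Real.exp (c * Real.arctan (x * r)))
      (Real.exp (c * Real.arctan (s * r)) * (c * r / (1 + s ^ 2 * r ^ 2))) s :=
  (((hasDerivAt_mul_const r).arctan.const_mul c).exp).congr_deriv (by ring)

theorem hasDerivAt_realGammaMinus (hp : 1 < p) (hs : s ∈ Ioo (-1) 1) :
    HasDerivAt (realGammaMinus p) (realGammaMinus p s * gammaLogDeriv p s) s := by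
  have hsqrt : √(p - 1) ≠ 0 := (Real.sqrt_pos.2 (sub_pos.2 hp)).ne'
  refine ((hasDerivAt_one_add_div_one_sub_rpow (1 / p) hs).mul
    (hasDerivAt_exp_mul_arctan_mul ((p - 2) / (p * √(p - 1))) √(p - 1) s)).congr_deriv ?_
  have hpow : 1 / p * (2 / (1 - s ^ 2)) = 2 / (p * (1 - s ^ 2)) := by
    rw [div_mul_div_comm, one_mul]
  have hexp : (p - 2) / (p * √(p - 1)) * √(p - 1) / (1 + s ^ 2 * √(p - 1) ^ 2) =
      (p - 2) / (p * (1 + s ^ 2 * (p - 1))) := by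
    rw [Real.sq_sqrt (sub_pos.2 hp).le, ← div_div, div_mul_cancel₀ _ hsqrt, div_div]
  rw [hpow, hexp, gammaLogDeriv_eq_add hp hs, realGammaMinus]
  ring

theorem strictMonoOn_realGammaMinus (hp : 1 < p) :
    StrictMonoOn (realGammaMinus p) (Ioo (-1) 1) := by
  refine strictMonoOn_of_hasDerivWithinAt_pos (convex_Ioo _ _)
    (fun s hs => (hasDerivAt_realGammaMinus hp hs).continuousAt.continuousWithinAt)
    (fun s hs => (hasDerivAt_realGammaMinus hp (interior_subset hs)).hasDerivWithinAt)
    fun s hs => ?_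
  have hs := interior_subset hs
  exact mul_pos (realGammaMinus_pos p hs) (gammaLogDeriv_pos hp hs)

theorem tendsto_realGammaMinus_nhdsGT_neg_one (hp : 0 < p) :
    Tendsto (realGammaMinus p) (𝓝[>] (-1)) (𝓝 0) := by
  have hcont : ContinuousAt (realGammaMinus p) (-1) := by
    have hpow : ContinuousAt (fun s : ℝ => ((1 + s) / (1 - s)) ^ (1 / p)) (-1) :=
      ContinuousAt.rpow_const
        ((continuousAt_const.add continuousAt_id).div (continuousAt_const.sub continuousAt_id)
          (by norm_num)) (Or.inr (by positivity))
    exact hpow.mul (by fun_prop)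
  have hzero : realGammaMinus p (-1) = 0 := by
    simp [realGammaMinus, Real.zero_rpow (inv_ne_zero hp.ne')]
  exact hzero ▸ hcont.tendsto.mono_left nhdsWithin_le_nhds

theorem tendsto_realGammaMinus_nhdsLT_one (hp : 0 < p) :
    Tendsto (realGammaMinus p) (𝓝[<] 1) atTop := by
  have hsub : Tendsto (fun s : ℝ => 1 - s) (𝓝[<] 1) (𝓝[>] 0) := by
    refine tendsto_nhdsWithin_iff.2 ⟨?_, ?_⟩
    · exact (Continuous.tendsto' (by fun_prop) 1 0 (by simp)).mono_left nhdsWithin_le_nhds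
    · filter_upwards [self_mem_nhdsWithin] with s hs using sub_pos.2 (mem_Iio.1 hs)
  have hadd : Tendsto (fun s : ℝ => 1 + s) (𝓝[<] 1) (𝓝 2) :=
    (Continuous.tendsto' (by fun_prop) 1 2 (by norm_num)).mono_left nhdsWithin_le_nhds
  have hquot : Tendsto (fun s : ℝ => (1 + s) / (1 - s)) (𝓝[<] 1) atTop :=
    hadd.pos_mul_atTop two_pos hsub.inv_tendsto_nhdsGT_zero
  have hexp : ContinuousAt
      (fun s => Real.exp ((p - 2) / (p * √(p - 1)) * Real.arctan (s * √(p - 1)))) 1 := by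
    fun_prop
  exact ((tendsto_rpow_atTop (one_div_pos.2 hp)).comp hquot).atTop_mul_pos (Real.exp_pos _)
    (hexp.tendsto.mono_left nhdsWithin_le_nhds)

theorem bijOn_realGammaMinus (hp : 1 < p) :
    BijOn (realGammaMinus p) (Ioo (-1) 1) (Ioi 0) := by
  have hp0 : 0 < p := zero_lt_one.trans hp
  refine ⟨fun s hs => realGammaMinus_pos p hs, (strictMonoOn_realGammaMinus hp).injOn, ?_⟩
  exact isPreconnected_Ioo.intermediate_value_Ioi
    (le_principal_iff.2 (Ioo_mem_nhdsGT (by norm_num)))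
    (le_principal_iff.2 (Ioo_mem_nhdsLT (by norm_num)))
    (fun s hs => (hasDerivAt_realGammaMinus hp hs).continuousAt.continuousWithinAt)
    (tendsto_realGammaMinus_nhdsGT_neg_one hp0) (tendsto_realGammaMinus_nhdsLT_one hp0)

theorem realUMinus_mem_Ioo (hp : 1 < p) (ht : 0 < t) : realUMinus p t ∈ Ioo (-1) 1 :=
  (bijOn_realGammaMinus hp).surjOn.mapsTo_invFunOn ht

theorem realGammaMinus_realUMinus (hp : 1 < p) (ht : 0 < t) :
    realGammaMinus p (realUMinus p t) = t :=
  (bijOn_realGammaMinus hp).surjOn.rightInvOn_invFunOn ht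

theorem realUMinus_realGammaMinus (hp : 1 < p) (hs : s ∈ Ioo (-1) 1) :
    realUMinus p (realGammaMinus p s) = s :=
  (bijOn_realGammaMinus hp).injOn.leftInvOn_invFunOn hs

theorem realUMinus_one (hp : 1 < p) : realUMinus p 1 = 0 := by
  simpa only [realGammaMinus_zero] using
    realUMinus_realGammaMinus hp (s := 0) ⟨neg_one_lt_zero, one_pos⟩

theorem realUMinus_inv (hp : 1 < p) (ht : 0 < t) : realUMinus p t⁻¹ = -realUMinus p t := by
  have hu := realUMinus_mem_Ioo hp ht
  have hneg : -realUMinus p t ∈ Ioo (-1) 1 := ⟨neg_lt_neg hu.2, neg_lt.1 hu.1⟩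
  simpa only [realGammaMinus_neg p hu, realGammaMinus_realUMinus hp ht] using
    realUMinus_realGammaMinus hp hneg

theorem hasDerivAt_realUMinus (hp : 1 < p) (ht : 0 < t) :
    HasDerivAt (realUMinus p) (t * gammaLogDeriv p (realUMinus p t))⁻¹ t := by
  have hu := realUMinus_mem_Ioo hp ht
  have hderiv := hasDerivAt_realGammaMinus hp hu
  rw [realGammaMinus_realUMinus hp ht] at hderiv
  exact hasDerivAt_invFunOn (strictMonoOn_realGammaMinus hp) (bijOn_realGammaMinus hp)
    (Ioo_mem_nhds hu.1 hu.2) (Ioi_mem_nhds ht) hderiv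
    (mul_pos ht (gammaLogDeriv_pos hp hu)).ne'

theorem realHMinus_eq_mul_logSlope (p t : ℝ) :
    realHMinus p t = realUMinus p t * logSlope p (realUMinus p t) :=
  mul_assoc _ _ _

theorem logSlope_neg (p s : ℝ) : logSlope p (-s) = logSlope p s := by
  rw [logSlope, logSlope, neg_sq]

theorem hasDerivAt_logSlope (hp : 1 < p) (hs : s ∈ Ioo (-1) 1) :
    HasDerivAt (logSlope p)
      (logSlope p s * ((1 / p - 1 / 2) * (2 * s / (s ^ 2 + 1 / (p - 1))) +
        -(1 / p) * (-(2 * s) / (1 - s ^ 2)))) s := by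
  have hsq : HasDerivAt (fun x : ℝ => x ^ 2) (2 * s) s := by
    simpa using hasDerivAt_pow 2 s
  refine ((hasDerivAt_rpow_const_eq_mul_logDeriv (1 / p - 1 / 2) (hsq.add_const (1 / (p - 1)))
    (sq_add_one_div_pos hp s).ne').mul (hasDerivAt_rpow_const_eq_mul_logDeriv (-(1 / p))
      (hsq.const_sub 1) (one_sub_sq_pos hs).ne')).congr_deriv ?_
  rw [logSlope]
  ring

theorem hasDerivAt_mul_logSlope (hp : 1 < p) (hs : s ∈ Ioo (-1) 1) :
    HasDerivAt (fun x => x * logSlope p x) (logSlope p s * gammaLogDeriv p s) s := by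
  refine ((hasDerivAt_id' s).mul (hasDerivAt_logSlope hp hs)).congr_deriv ?_
  rw [gammaLogDeriv_eq_one_add hp hs]
  ring

theorem hasDerivAt_realHMinus (hp : 1 < p) (ht : 0 < t) :
    HasDerivAt (realHMinus p) (logSlope p (realUMinus p t) / t) t := by
  have hu := realUMinus_mem_Ioo hp ht
  have hrate := (gammaLogDeriv_pos hp hu).ne'
  rw [funext (realHMinus_eq_mul_logSlope p)]
  refine ((hasDerivAt_mul_logSlope hp hu).comp t (hasDerivAt_realUMinus hp ht)).congr_deriv ?_
  field_simp

theorem mul_deriv_realHMinus (hp : 1 < p) (ht : 0 < t) :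
    t * deriv (realHMinus p) t = logSlope p (realUMinus p t) := by
  rw [(hasDerivAt_realHMinus hp ht).deriv, mul_div_cancel₀ _ ht.ne']

theorem logSlope_characteristic_eq (hp : 1 < p) (hs : s ∈ Ioo (-1) 1) :
    ((s * logSlope p s) ^ 2 + logSlope p s ^ 2 / (p - 1)) ^ ((p - 2) / 2) *
      ((s * logSlope p s) ^ 2 - logSlope p s ^ 2) = -1 := by
  have hx := sq_add_one_div_pos hp s
  have hy := one_sub_sq_pos hs
  have hq := div_pos hx hy
  have hplus : (s * logSlope p s) ^ 2 + logSlope p s ^ 2 / (p - 1) =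
      ((s ^ 2 + 1 / (p - 1)) / (1 - s ^ 2)) ^ (2 * (1 / p)) := by
    rw [← rpow_mul_rpow_sq_mul hx hy, logSlope]
    ring
  have hminus : (s * logSlope p s) ^ 2 - logSlope p s ^ 2 =
      -((s ^ 2 + 1 / (p - 1)) / (1 - s ^ 2)) ^ (2 * (1 / p) - 1) := by
    rw [Real.rpow_sub_one hq.ne', ← rpow_mul_rpow_sq_mul hx hy, logSlope]
    field_simp
    ring
  have hexponent : 2 * (1 / p) * ((p - 2) / 2) + (2 * (1 / p) - 1) = 0 := by
    field_simp
    ring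
  rw [hplus, hminus, mul_neg, ← Real.rpow_mul hq.le, ← Real.rpow_add hq, hexponent,
    Real.rpow_zero]

theorem realCharExpr_realHMinus (hp : 1 < p) (ht : 0 < t) :
    realCharExpr p (realHMinus p) t = -1 := by
  rw [realCharExpr, ← mul_pow, mul_deriv_realHMinus hp ht, realHMinus_eq_mul_logSlope]
  exact logSlope_characteristic_eq hp (realUMinus_mem_Ioo hp ht)

end

theorem stmt9_general (p : ℝ) (hp : 1 < p) :
    StrictMonoOn (realGammaMinus p) (Ioo (-1) 1) ∧
    BijOn (realGammaMinus p) (Ioo (-1) 1) (Ioi 0) ∧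
    realHMinus p 1 = 0 ∧
    (∀ t : ℝ, 0 < t → realHMinus p (1 / t) = -realHMinus p t) ∧
    (∀ t : ℝ, 0 < t → DifferentiableAt ℝ (realHMinus p) t ∧
      t * deriv (realHMinus p) t * realUMinus p t = realHMinus p t) ∧
    (∀ t : ℝ, 0 < t → realCharExpr p (realHMinus p) t = -1) := by
  refine ⟨strictMonoOn_realGammaMinus hp, bijOn_realGammaMinus hp, ?_, fun t ht => ?_,
    fun t ht => ⟨(hasDerivAt_realHMinus hp ht).differentiableAt, ?_⟩,
    fun t ht => realCharExpr_realHMinus hp ht⟩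
  · rw [realHMinus_eq_mul_logSlope, realUMinus_one hp, zero_mul]
  · rw [one_div, realHMinus_eq_mul_logSlope, realHMinus_eq_mul_logSlope, realUMinus_inv hp ht,
      logSlope_neg, neg_mul]
  · rw [mul_deriv_realHMinus hp ht, realHMinus_eq_mul_logSlope, mul_comm]

theorem stmt9 (n : ℕ) (hn : 2 ≤ n) :
    StrictMonoOn (GammaMinus n) (Set.Ioo (-1 : ℝ) 1) ∧
    Set.BijOn (GammaMinus n) (Set.Ioo (-1 : ℝ) 1) (Set.Ioi (0 : ℝ)) ∧
    HMinus n 1 = 0 ∧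
    (∀ t : ℝ, 0 < t → HMinus n (1 / t) = -HMinus n t) ∧
    (∀ t : ℝ, 0 < t → DifferentiableAt ℝ (HMinus n) t ∧
      t * deriv (HMinus n) t * uMinus n t = HMinus n t) ∧
    (∀ t : ℝ, 0 < t → charExpr n (HMinus n) t = -1) :=
  stmt9_general n (mod_cast hn)
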